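/- Let (x_i)_{i=1}^n be a normalized block sequence in X_iw^p. Then for all scalars a_1,...,a_n one has ‖Σ_{i=1}^n a_i x_i‖ ≤ 2·(Σ_{i=1}^n |a_i|^p)^{1/p}. -/

import Mathlib

/-!
The norming set satisfies `|f (∑ aᵢ xᵢ)| ≤ 2 ‖a‖_p` for every `f` in it, by induction on the
construction of `f` (`abs_evalPair_le`).  For `f = w⁻¹ ∑ λ_q f_q` and each `q`, split
`f_q (∑ aᵢ xᵢ)` into the contribution of the *first* `xᵢ` on which `f_q` does not vanish and the
contribution of the remaining ones.

* First parts: for fixed `i` let `T i` be the set of `q` whose first vector is `xᵢ`.  The norming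
  set is closed under passing to subsets of the `f_q` (the Schreier families are hereditary), so
  `w⁻¹ ∑_{q ∈ T i} λ_q f_q` is `(∑_{q ∈ T i} |λ_q|^{p*})^{1/p*}` times a norming functional, and its
  value at the normalized vector `xᵢ` is at most that number.  The sets `T i` are disjoint, so
  Hölder bounds the sum of the first parts by `‖a‖_p`.
* Remaining parts: the sets of the non-first indices belonging to different `q` are pairwise
  disjoint, since both `(f_q)` and `(xᵢ)` are block sequences.  The induction hypothesis for
  each `f_q` and Hölder give `2 w⁻¹ ‖a‖_p ≤ ‖a‖_p`, as `w ≥ 2`.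
-/


open Filter Topology
open scoped ENNReal

noncomputable section

/-! ### Abstract Banach space notions -/

section Abstract

variable {X : Type*} [NormedAddCommGroup X] [NormedSpace ℝ X]

/-- A sequence is normalized if every term has norm one. -/
def Normalized (x : ℕ → X) : Prop := ∀ i, ‖x i‖ = 1

/-- A sequence is weakly null if it tends to `0` in the weak topology. -/
def WeaklyNull (x : ℕ → X) : Prop :=
  ∀ f : X →L[ℝ] ℝ, Tendsto (fun i => f (x i)) atTop (𝓝 (0 : ℝ))

end Abstract

/-- The ℓ₁ norm of finite coefficient vectors (the norms of finite linear
combinations of the unit vector basis of ℓ₁). -/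
def l1Norm : ∀ m : ℕ, (Fin m → ℝ) → ℝ := fun _ a => ∑ i, |a i|

/-- The sup norm of finite coefficient vectors (the norms of finite linear
combinations of the unit vector basis of c₀). -/
def supNorm : ∀ m : ℕ, (Fin m → ℝ) → ℝ := fun _ a => ⨆ i, |a i|

/-- The ℓ_p norm of finite coefficient vectors, `1 ≤ p < ∞`. -/
def lpNormFin (p : ℝ) : ∀ m : ℕ, (Fin m → ℝ) → ℝ := fun _ a => (∑ i, |a i| ^ p) ^ (1 / p)

/-- The ℓ_q norms of finite coefficient vectors, `q ∈ [1,∞]`, where `q = ∞`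
corresponds to `c₀`. -/
def finLqNorm (q : ℝ≥0∞) : ∀ m : ℕ, (Fin m → ℝ) → ℝ := fun m a =>
  if q = ⊤ then supNorm m a else lpNormFin q.toReal m a

/-- The family of seminorms `ν` (of finite combinations of a sequence in a seminormed
space) is `C`-equivalent to the family `μ`:  there are `A B > 0` with `A * B ≤ C` and
`(1/A) * μ ≤ ν ≤ B * μ`. -/
def NormFamEquiv (C : ℝ) (μ ν : ∀ m : ℕ, (Fin m → ℝ) → ℝ) : Prop :=
  ∃ A B : ℝ, 0 < A ∧ 0 < B ∧ A * B ≤ C ∧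
    ∀ (m : ℕ) (a : Fin m → ℝ), (1 / A) * μ m a ≤ ν m a ∧ ν m a ≤ B * μ m a

section Abstract2

variable {X : Type*} [NormedAddCommGroup X] [NormedSpace ℝ X]

/-- The sequence `x` generates the spreading model whose finite-combination
seminorms are given by the family `ν`. -/
def GeneratesSpreadingModel (x : ℕ → X) (ν : ∀ m : ℕ, (Fin m → ℝ) → ℝ) : Prop :=
  ∀ (m : ℕ) (a : Fin m → ℝ), ∀ ε > (0 : ℝ), ∃ N : ℕ, ∀ j : Fin m → ℕ,
    StrictMono j → (∀ i, N ≤ j i) → |‖∑ i, a i • x (j i)‖ - ν m a| < ε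

/-- The array of sequences `A` (row `A i` is the `i`-th sequence) generates the
asymptotic model whose finite-combination seminorms are given by `ν`. -/
def GeneratesAsymptoticModel (A : ℕ → ℕ → X) (ν : ∀ l : ℕ, (Fin l → ℝ) → ℝ) : Prop :=
  ∀ (l : ℕ) (a : Fin l → ℝ), ∀ ε > (0 : ℝ), ∃ N : ℕ, ∀ j : Fin l → ℕ,
    StrictMono j → (∀ i, N ≤ j i) → |‖∑ i, a i • A i (j i)‖ - ν l a| < ε

/-- `e` is a Schauder basis of `X`. -/
def IsSchauderBasis (e : ℕ → X) : Prop :=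
  ∀ x : X, ∃! a : ℕ → ℝ,
    Tendsto (fun n => ∑ i ∈ Finset.range n, a i • e i) atTop (𝓝 x)

/-- The basis `e` is 1-unconditional. -/
def OneUnconditional (e : ℕ → X) : Prop :=
  ∀ (F : Finset ℕ) (a ε : ℕ → ℝ), (∀ i, ε i = 1 ∨ ε i = -1) →
    ‖∑ i ∈ F, (ε i * a i) • e i‖ = ‖∑ i ∈ F, a i • e i‖

/-- `x` is a block sequence with respect to the basis `e`. -/
def IsBlockSeq (e : ℕ → X) (x : ℕ → X) : Prop :=
  ∃ F : ℕ → Finset ℕ, (∀ k, (F k).Nonempty) ∧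
    (∀ k l : ℕ, k < l → ∀ i ∈ F k, ∀ j ∈ F l, i < j) ∧
    ∀ k, x k ≠ 0 ∧ x k ∈ Submodule.span ℝ (e '' ↑(F k))

/-- `z` is a finite block sequence with respect to the basis `e`. -/
def IsFinBlockSeq (e : ℕ → X) {n : ℕ} (z : Fin n → X) : Prop :=
  ∃ F : Fin n → Finset ℕ, (∀ k, (F k).Nonempty) ∧
    (∀ k l : Fin n, k < l → ∀ i ∈ F k, ∀ j ∈ F l, i < j) ∧
    ∀ k, z k ≠ 0 ∧ z k ∈ Submodule.span ℝ (e '' ↑(F k))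

/-- `Y` is a block subspace of `X` (with respect to the basis `e`): the closed
linear span of an infinite normalized block sequence. -/
def IsBlockSubspace (e : ℕ → X) (Y : Set X) : Prop :=
  ∃ y : ℕ → X, IsBlockSeq e y ∧ Normalized y ∧
    Y = closure (↑(Submodule.span ℝ (Set.range y)) : Set X)

/-- The finite sequence `z` is `C`-equivalent to a finite basic sequence whose
finite-combination norms are given by `μ`. -/
def FinSeqEquiv (C : ℝ) {n : ℕ} (μ : (Fin n → ℝ) → ℝ) (z : Fin n → X) : Prop :=
  ∃ A B : ℝ, 0 < A ∧ 0 < B ∧ A * B ≤ C ∧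
    ∀ a : Fin n → ℝ, (1 / A) * μ a ≤ ‖∑ i, a i • z i‖ ∧ ‖∑ i, a i • z i‖ ≤ B * μ a

/-- The finite basic sequence with combination norms `μ` is block representable
in `Y ⊆ X`. -/
def BlockRepresentableIn (e : ℕ → X) (Y : Set X) {n : ℕ} (μ : (Fin n → ℝ) → ℝ) : Prop :=
  ∀ ε > (0 : ℝ), ∃ z : Fin n → X, (∀ i, z i ∈ Y) ∧ IsFinBlockSeq e z ∧
    FinSeqEquiv (1 + ε) μ z

/-- `x` is a (Schauder) basic sequence. -/
def IsBasicSeq (x : ℕ → X) : Prop :=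
  (∀ i, x i ≠ 0) ∧ ∃ K : ℝ, 0 < K ∧ ∀ (a : ℕ → ℝ) (m n : ℕ), m ≤ n →
    ‖∑ i ∈ Finset.range m, a i • x i‖ ≤ K * ‖∑ i ∈ Finset.range n, a i • x i‖

end Abstract2

/-- A plegma of `k` strictly increasing `l`-tuples of naturals. -/
def IsPlegma (k l : ℕ) (s : Fin k → Fin l → ℕ) : Prop :=
  (∀ i, StrictMono (s i)) ∧
  (∀ i₁ i₂ : Fin k, ∀ j₁ j₂ : Fin l, j₁ < j₂ → s i₁ j₁ < s i₂ j₂) ∧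
  (∀ i₁ i₂ : Fin k, i₁ < i₂ → ∀ j, s i₁ j ≤ s i₂ j)

/-- A strict plegma: a plegma with pairwise disjoint tuples. -/
def IsStrictPlegma (k l : ℕ) (s : Fin k → Fin l → ℕ) : Prop :=
  IsPlegma k l s ∧ ∀ i₁ i₂ : Fin k, i₁ ≠ i₂ → ∀ j₁ j₂ : Fin l, s i₁ j₁ ≠ s i₂ j₂

section Abstract3

variable {X : Type*} [NormedAddCommGroup X] [NormedSpace ℝ X]

/-- The `l`-array `x` generates the joint spreading model with finite-combination
seminorms `ν`. -/
def GeneratesJSM (l : ℕ) (x : Fin l → ℕ → X)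
    (ν : ∀ k : ℕ, (Fin l → Fin k → ℝ) → ℝ) : Prop :=
  ∀ (k : ℕ) (a : Fin l → Fin k → ℝ), ∀ ε > (0 : ℝ), ∃ N : ℕ,
    ∀ s : Fin l → Fin k → ℕ, IsStrictPlegma l k s → (∀ i j, N ≤ s i j) →
      |‖∑ i, ∑ j, a i j • x i (s i j)‖ - ν k a| < ε

/-- `X` admits a unique joint spreading model with respect to the family of
sequences `F`. -/
def UniqueJSM (F : Set (ℕ → X)) : Prop :=
  ∃ C : ℝ, 1 ≤ C ∧ ∀ (l : ℕ) (x y : Fin l → ℕ → X),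
    (∀ i, x i ∈ F) → (∀ i, y i ∈ F) →
    ∀ ν μ, GeneratesJSM l x ν → GeneratesJSM l y μ →
      ∃ A B : ℝ, 0 < A ∧ 0 < B ∧ A * B ≤ C ∧
        ∀ (k : ℕ) (a : Fin l → Fin k → ℝ),
          (1 / A) * μ k a ≤ ν k a ∧ ν k a ≤ B * μ k a

/-- `X` admits a unique asymptotic model with respect to the family of
sequences `F`. -/
def UniqueAM (F : Set (ℕ → X)) : Prop :=
  ∀ x y : ℕ → ℕ → X, (∀ i, x i ∈ F) → (∀ i, y i ∈ F) →
    ∀ ν μ, GeneratesAsymptoticModel x ν → GeneratesAsymptoticModel y μ →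
      ∃ C : ℝ, 1 ≤ C ∧ NormFamEquiv C μ ν

end Abstract3

/-- A bundled Banach-space candidate. -/
structure BanachPkg : Type 1 where
  X : Type
  [grp : NormedAddCommGroup X]
  [mod : NormedSpace ℝ X]

attribute [instance] BanachPkg.grp BanachPkg.mod

/-! ### c₀₀ and the norming sets -/

/-- The finitely supported real sequences. -/
abbrev c00 : Type := ℕ →₀ ℝ

/-- Minimum of the support (0 for the zero vector). -/
def minSupp (x : c00) : ℕ := if h : x.support.Nonempty then x.support.min' h else 0

/-- Maximum of the support (0 for the zero vector). -/
def maxSupp (x : c00) : ℕ := if h : x.support.Nonempty then x.support.max' h else 0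

/-- Minimum of a finset of naturals (0 if empty). -/
def finsetMin (F : Finset ℕ) : ℕ := if h : F.Nonempty then F.min' h else 0

/-- `x < y` as successive (block) vectors. -/
def Blocks (x y : c00) : Prop := maxSupp x < minSupp y

/-- The Schreier families. -/
def Schreier : ℕ → Set (Finset ℕ)
  | 0 => {F | ∃ i : ℕ, F = {i}}
  | n + 1 => {F | ∃ (d : ℕ) (G : Fin d → Finset ℕ),
      (∀ k, G k ∈ Schreier n) ∧
      (∀ k l : Fin d, k < l → ∀ i ∈ G k, ∀ j ∈ G l, i < j) ∧
      (∀ i ∈ F, d ≤ i) ∧ F = Finset.univ.biUnion G}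

/-- The family `A_m` of sets of cardinality at most `m`. -/
def SchreierA (m : ℕ) : Set (Finset ℕ) := {F | F.card ≤ m}

/-- The operation `A * B` on families of finite sets. -/
def famStar (A B : Set (Finset ℕ)) : Set (Finset ℕ) :=
  {F | ∃ (d : ℕ) (G : Fin d → Finset ℕ),
      (∀ k, G k ∈ B) ∧ (∀ k, (G k).Nonempty) ∧
      (∀ k l : Fin d, k < l → ∀ i ∈ G k, ∀ j ∈ G l, i < j) ∧
      (Finset.univ.image fun k => finsetMin (G k)) ∈ A ∧ F = Finset.univ.biUnion G}

/-- A finite block sequence in `c00` is `S`-admissible. -/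
def Admissible (S : Set (Finset ℕ)) {d : ℕ} (f : Fin d → c00) : Prop :=
  (∀ q, (f q).support.Nonempty) ∧
  (∀ q r : Fin d, q < r → Blocks (f q) (f r)) ∧
  (Finset.univ.image fun q => minSupp (f q)) ∈ S

/-- The two fixed sequences `(m_j)`, `(n_j)` (indexed here starting at `0`, so that
`m 0` plays the role of `m_1` etc.) together with their growth conditions. -/
structure IWParams where
  m : ℕ → ℕ
  n : ℕ → ℕ
  m_mono : StrictMono m
  n_mono : StrictMono n
  m_first : m 0 = 2
  n_first : n 0 = 1
  growth_exp : ∀ C : ℝ, 1 < C → Tendsto (fun j => C ^ (n j) / (m j : ℝ)) atTop atTop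
  growth_ratio : Tendsto (fun j => (m j : ℝ) / (m (j + 1) : ℝ)) atTop (𝓝 0)
  growth_sum : ∀ (l : ℕ) (js : Fin l → ℕ) (j : ℕ), (∀ i, js i ≤ j) →
    (∏ i, m (js i)) < m (j + 1) ^ 2 → (∑ i, n (js i)) + 1 < n (j + 1)

/-- The action of a functional `f ∈ c00` on a vector `x ∈ c00`. -/
def evalPair (f x : c00) : ℝ := f.sum fun i a => a * x i

/-- The norming set `W_iw`, together with admissible weights: `WIW P f w` means
that `f` belongs to the norming set and `w` is a weight of (one representation of)
`f`; the unit functionals `±e_i^*` have weight `∞`. -/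
inductive WIW (P : IWParams) : c00 → ℕ∞ → Prop
  | unit (i : ℕ) (s : ℝ) (hs : s = 1 ∨ s = -1) : WIW P (Finsupp.single i s) ⊤
  | op (l : ℕ) (hl : 0 < l) (js : Fin l → ℕ) (d : ℕ) (f : Fin d → c00) (w : Fin d → ℕ∞)
      (hf : ∀ q, WIW P (f q) (w q))
      (hadm : Admissible (Schreier (∑ i, P.n (js i))) f)
      (hvfg : ∀ q r : Fin d, (q : ℕ) + 1 = (r : ℕ) → (maxSupp (f q) : ℕ∞) < w r) :
      WIW P (((∏ i, P.m (js i) : ℕ) : ℝ)⁻¹ • ∑ q, f q) ((∏ i, P.m (js i) : ℕ) : ℕ∞)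

/-- Membership in the norming set `W_iw`. -/
def memWIW (P : IWParams) (f : c00) : Prop := ∃ w, WIW P f w

/-- The norm of `X_iw`, on finitely supported vectors. -/
def iwNorm (P : IWParams) (x : c00) : ℝ :=
  sSup {r | ∃ f, memWIW P f ∧ r = evalPair f x}

/-- The dual norm of a finitely supported functional, as an element of `X_iw^*`. -/
def iwDualNorm (P : IWParams) (f : c00) : ℝ :=
  sSup {r | ∃ x : c00, iwNorm P x ≤ 1 ∧ r = evalPair f x}

/-- The auxiliary norming set `W_aux^N` together with admissible weights. -/
inductive WAux (P : IWParams) (N : ℕ) : c00 → ℕ∞ → Prop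
  | unit (i : ℕ) (s : ℝ) (hs : s = 1 ∨ s = -1) : WAux P N (Finsupp.single i s) ⊤
  | op (l : ℕ) (hl : 0 < l) (js : Fin l → ℕ) (d : ℕ) (f : Fin d → c00) (w : Fin d → ℕ∞)
      (hf : ∀ q, WAux P N (f q) (w q))
      (hadm : Admissible (famStar (Schreier (∑ i, P.n (js i))) (SchreierA 3)) f)
      (hlarge : ∀ q : Fin d, 0 < (q : ℕ) → (N : ℕ∞) < w q) :
      WAux P N (((∏ i, P.m (js i) : ℕ) : ℝ)⁻¹ • ∑ q, f q) ((∏ i, P.m (js i) : ℕ) : ℕ∞)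

/-- An `(n, ε)` basic special convex combination. -/
def IsBasicSCC (n : ℕ) (ε : ℝ) (x : c00) : Prop :=
  ∃ F : Finset ℕ, x.support ⊆ F ∧ F ∈ Schreier n ∧ (∀ i, 0 ≤ x i) ∧
    (∑ i ∈ F, x i) = 1 ∧ ∀ G ⊆ F, G ∈ Schreier (n - 1) → (∑ i ∈ G, x i) < ε

/-- An `(n, ε)` special convex combination `∑ c i • x i`. -/
def IsSCC (n : ℕ) (ε : ℝ) {m : ℕ} (c : Fin m → ℝ) (x : Fin m → c00) : Prop :=
  (∀ i, (x i).support.Nonempty) ∧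
  (∀ i j : Fin m, i < j → Blocks (x i) (x j)) ∧
  IsBasicSCC n ε (∑ i, c i • Finsupp.single (minSupp (x i)) (1 : ℝ))

/-- `x` generates, with respect to the norm function `Nrm` on `c00`, the spreading
model whose finite-combination seminorms are `ν`. -/
def GeneratesSMwith (Nrm : c00 → ℝ) (x : ℕ → c00) (ν : ∀ m : ℕ, (Fin m → ℝ) → ℝ) : Prop :=
  ∀ (m : ℕ) (a : Fin m → ℝ), ∀ ε > (0 : ℝ), ∃ N : ℕ, ∀ j : Fin m → ℕ,
    StrictMono j → (∀ i, N ≤ j i) → |Nrm (∑ i, a i • x (j i)) - ν m a| < ε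

/-- The array `A` generates, with respect to the norm function `Nrm` on `c00`, the
asymptotic model whose finite-combination seminorms are `ν`. -/
def GeneratesAMwith (Nrm : c00 → ℝ) (A : ℕ → ℕ → c00) (ν : ∀ l : ℕ, (Fin l → ℝ) → ℝ) : Prop :=
  ∀ (l : ℕ) (a : Fin l → ℝ), ∀ ε > (0 : ℝ), ∃ N : ℕ, ∀ j : Fin l → ℕ,
    StrictMono j → (∀ i, N ≤ j i) → |Nrm (∑ i, a i • A i (j i)) - ν l a| < ε

/-- A normalized block sequence in `c00` with respect to a norm function. -/
def IsNormBlockSeq (Nrm : c00 → ℝ) (y : ℕ → c00) : Prop :=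
  (∀ k, (y k).support.Nonempty) ∧ (∀ k, Blocks (y k) (y (k + 1))) ∧ ∀ k, Nrm (y k) = 1

/-- A `(C, (j_i)_{i ∈ I})` rapidly increasing sequence, `I` a (finite) interval. -/
def IsRIS (P : IWParams) (C : ℝ) (I : Finset ℕ) (j : ℕ → ℕ) (x : ℕ → c00) : Prop :=
  (∀ a ∈ I, ∀ b ∈ I, ∀ c : ℕ, a ≤ c → c ≤ b → c ∈ I) ∧
  (∀ a ∈ I, ∀ b ∈ I, a < b → j a < j b) ∧
  (∀ i ∈ I, (x i).support.Nonempty) ∧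
  (∀ a ∈ I, ∀ b ∈ I, a < b → Blocks (x a) (x b)) ∧
  (∀ i ∈ I, iwNorm P (x i) ≤ C) ∧
  (∀ i ∈ I, ∀ i' ∈ I, i' + 1 = i → (maxSupp (x i') : ℝ) < Real.sqrt (P.m (j i))) ∧
  (∀ i ∈ I, ∀ f w, WIW P f w → w < ((P.m (j i) : ℕ) : ℕ∞) →
    |evalPair f (x i)| ≤ C / (w.toNat : ℝ))

/-- An infinite `(C, (j_i)_i)` rapidly increasing sequence. -/
def IsRISNat (P : IWParams) (C : ℝ) (j : ℕ → ℕ) (x : ℕ → c00) : Prop :=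
  StrictMono j ∧ (∀ i, (x i).support.Nonempty) ∧ (∀ i, Blocks (x i) (x (i + 1))) ∧
  (∀ i, iwNorm P (x i) ≤ C) ∧
  (∀ i, (maxSupp (x i) : ℝ) < Real.sqrt (P.m (j (i + 1)))) ∧
  (∀ i, ∀ f w, WIW P f w → w < ((P.m (j i) : ℕ) : ℕ∞) →
    |evalPair f (x i)| ≤ C / (w.toNat : ℝ))

/-- `X` together with the basis `e` is a realization of the space `X_iw`: a Banach
space in which `c00` sits isometrically (w.r.t. `iwNorm`) and densely. -/
structure IsIWRealization (P : IWParams) (X : Type*) [NormedAddCommGroup X]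
    [NormedSpace ℝ X] (e : ℕ → X) : Prop where
  complete : CompleteSpace X
  dense : DenseRange fun a : c00 => ∑ i ∈ a.support, a i • e i
  norm_eq : ∀ a : c00, ‖∑ i ∈ a.support, a i • e i‖ = iwNorm P a

/-- The conjugate exponent of `p`. -/
def conjExp (p : ℝ) : ℝ := p / (p - 1)

/-- The norming set `W_iw^p` together with admissible weights. -/
inductive WIWp (P : IWParams) (p : ℝ) : c00 → ℕ∞ → Prop
  | unit (i : ℕ) (s : ℝ) (hs : s = 1 ∨ s = -1) : WIWp P p (Finsupp.single i s) ⊤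
  | op (l : ℕ) (hl : 0 < l) (js : Fin l → ℕ) (d : ℕ) (f : Fin d → c00) (w : Fin d → ℕ∞)
      (lam : Fin d → ℝ) (hlam : (∑ q, |lam q| ^ conjExp p) ≤ 1)
      (hf : ∀ q, WIWp P p (f q) (w q))
      (hadm : Admissible (Schreier (∑ i, P.n (js i))) f)
      (hvfg : ∀ q r : Fin d, (q : ℕ) + 1 = (r : ℕ) → (maxSupp (f q) : ℕ∞) < w r) :
      WIWp P p (((∏ i, P.m (js i) : ℕ) : ℝ)⁻¹ • ∑ q, lam q • f q)
        ((∏ i, P.m (js i) : ℕ) : ℕ∞)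

/-- The norm of `X_iw^p` on finitely supported vectors. -/
def iwpNorm (P : IWParams) (p : ℝ) (x : c00) : ℝ :=
  sSup {r | ∃ f, (∃ w, WIWp P p f w) ∧ r = evalPair f x}

/-- The norming set of the space `X̃_iw`, together with admissible weights. -/
inductive WT (P : IWParams) : c00 → ℕ∞ → Prop
  | unit (i : ℕ) (s : ℝ) (hs : s = 1 ∨ s = -1) : WT P (Finsupp.single i s) ⊤
  | op (j : ℕ) (d : ℕ) (f : Fin d → c00) (w : Fin d → ℕ∞)
      (hf : ∀ q, WT P (f q) (w q))
      (hadm : Admissible (Schreier (P.n j)) f)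
      (hvfg : ∀ q r : Fin d, (q : ℕ) + 1 = (r : ℕ) → (maxSupp (f q) : ℕ∞) < w r) :
      WT P ((P.m j : ℝ)⁻¹ • ∑ q, f q) ((P.m j : ℕ) : ℕ∞)

/-- The norm of `X̃_iw` on finitely supported vectors. -/
def tNorm (P : IWParams) (x : c00) : ℝ :=
  sSup {r | ∃ f, (∃ w, WT P f w) ∧ r = evalPair f x}

end

/-! ### Supports and the duality pairing -/

lemma minSupp_le_of_ne {x : c00} {j : ℕ} (h : x j ≠ 0) : minSupp x ≤ j := by
  have hj : j ∈ x.support := Finsupp.mem_support_iff.2 h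
  unfold minSupp
  rw [dif_pos ⟨j, hj⟩]
  exact Finset.min'_le _ _ hj

lemma le_maxSupp_of_ne {x : c00} {j : ℕ} (h : x j ≠ 0) : j ≤ maxSupp x := by
  have hj : j ∈ x.support := Finsupp.mem_support_iff.2 h
  unfold maxSupp
  rw [dif_pos ⟨j, hj⟩]
  exact Finset.le_max' _ _ hj

lemma lt_of_blocks {x y : c00} (h : Blocks x y) {j k : ℕ} (hj : x j ≠ 0) (hk : y k ≠ 0) :
    j < k :=
  lt_of_le_of_lt (le_maxSupp_of_ne hj) (lt_of_lt_of_le h (minSupp_le_of_ne hk))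

lemma maxSupp_lt_of_blocks {x y : c00} (h : Blocks x y) (hy : y.support.Nonempty) :
    maxSupp x < maxSupp y := by
  obtain ⟨j, hj⟩ := hy
  have hj' := Finsupp.mem_support_iff.1 hj
  exact lt_of_lt_of_le h ((minSupp_le_of_ne hj').trans (le_maxSupp_of_ne hj'))

lemma evalPair_sum_right {ι : Type*} (s : Finset ι) (f : c00) (b : ι → ℝ) (x : ι → c00) :
    evalPair f (∑ i ∈ s, b i • x i) = ∑ i ∈ s, b i * evalPair f (x i) := by
  simp only [evalPair, Finsupp.sum, Finsupp.coe_finsetSum, Finset.sum_apply,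
    Finsupp.coe_smul, Pi.smul_apply, smul_eq_mul, Finset.mul_sum]
  rw [Finset.sum_comm]
  refine Finset.sum_congr rfl fun i _ => Finset.sum_congr rfl fun j _ => by ring

lemma evalPair_eq_linearCombination (f x : c00) :
    evalPair f x = Finsupp.linearCombination ℝ (fun i => x i) f := by
  simp [evalPair, Finsupp.linearCombination_apply]

lemma evalPair_smul_sum_left {ι : Type*} (s : Finset ι) (c : ℝ) (b : ι → ℝ) (f : ι → c00)
    (x : c00) :
    evalPair (c • ∑ q ∈ s, b q • f q) x = c * ∑ q ∈ s, b q * evalPair (f q) x := by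
  simp [evalPair_eq_linearCombination, map_sum]

lemma evalPair_neg_left (f x : c00) : evalPair (-f) x = -evalPair f x := by
  simp [evalPair_eq_linearCombination]

lemma exists_of_evalPair_ne {f x : c00} (h : evalPair f x ≠ 0) : ∃ j, f j ≠ 0 ∧ x j ≠ 0 := by
  obtain ⟨j, _, hj⟩ := Finset.exists_ne_zero_of_sum_ne_zero h
  exact ⟨j, left_ne_zero_of_mul hj, right_ne_zero_of_mul hj⟩

/-! ### Hereditary property of the Schreier families -/

lemma empty_mem_schreier_succ (n : ℕ) : (∅ : Finset ℕ) ∈ Schreier (n + 1) :=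
  ⟨0, Fin.elim0, fun k => k.elim0, fun k => k.elim0, by simp, by simp⟩

/-- Nonemptiness is needed because `Schreier 0` consists of singletons only. -/
lemma schreier_mono_nonempty (n : ℕ) : ∀ F ∈ Schreier n, ∀ E ⊆ F, E.Nonempty →
    E ∈ Schreier n := by
  induction n with
  | zero =>
    rintro F ⟨i, rfl⟩ E hE hne
    exact ⟨i, (Finset.subset_singleton_iff.1 hE).resolve_left hne.ne_empty⟩
  | succ n ih =>
    rintro F ⟨d, G, hG, hlt, hd, rfl⟩ E hE _
    -- Intersect the pieces with `E` and discard the empty intersections.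
    let K : Finset (Fin d) := Finset.univ.filter fun k => (G k ∩ E).Nonempty
    let e := K.orderEmbOfFin rfl
    have heK : ∀ k, (G (e k) ∩ E).Nonempty := fun k =>
      (Finset.mem_filter.1 (K.orderEmbOfFin_mem rfl k)).2
    refine ⟨K.card, fun k => G (e k) ∩ E, fun k => ih _ (hG _) _ Finset.inter_subset_left (heK k),
      ?_, ?_, ?_⟩
    · intro k l hkl i hi j hj
      exact hlt _ _ (e.strictMono hkl) i (Finset.mem_inter.1 hi).1 j (Finset.mem_inter.1 hj).1
    · intro i hi
      exact ((Finset.card_le_univ K).trans (by simp)).trans (hd i (hE hi))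
    · ext i
      simp only [Finset.mem_biUnion, Finset.mem_univ, true_and, Finset.mem_inter]
      constructor
      · intro hi
        obtain ⟨k, -, hk⟩ := Finset.mem_biUnion.1 (hE hi)
        have hkK : k ∈ K := Finset.mem_filter.2
          ⟨Finset.mem_univ _, ⟨i, Finset.mem_inter.2 ⟨hk, hi⟩⟩⟩
        have : k ∈ Set.range e := by rw [Finset.range_orderEmbOfFin]; exact hkK
        obtain ⟨k', rfl⟩ := this
        exact ⟨k', hk, hi⟩
      · rintro ⟨_, _, hi⟩
        exact hi

lemma schreier_mono {n : ℕ} (hn : 0 < n) {F E : Finset ℕ} (hF : F ∈ Schreier n)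
    (h : E ⊆ F) : E ∈ Schreier n := by
  rcases E.eq_empty_or_nonempty with rfl | hne
  · obtain ⟨k, rfl⟩ := Nat.exists_eq_succ_of_ne_zero hn.ne'
    exact empty_mem_schreier_succ k
  · exact schreier_mono_nonempty n F hF E h hne

/-! ### Elementary properties of the norming set -/

lemma IWParams.sum_n_pos (P : IWParams) {l : ℕ} (hl : 0 < l) (js : Fin l → ℕ) :
    0 < ∑ i, P.n (js i) := by
  have h : 0 < P.n (js ⟨0, hl⟩) := by
    have := P.n_mono.monotone (Nat.zero_le (js ⟨0, hl⟩))
    rw [P.n_first] at this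
    omega
  exact h.trans_le (Finset.single_le_sum (f := fun i => P.n (js i)) (fun _ _ => Nat.zero_le _)
    (Finset.mem_univ _))

lemma IWParams.two_le_m (P : IWParams) (j : ℕ) : 2 ≤ P.m j := by
  have := P.m_mono.monotone (Nat.zero_le j)
  rwa [P.m_first] at this

lemma IWParams.two_le_prod_m (P : IWParams) {l : ℕ} (hl : 0 < l) (js : Fin l → ℕ) :
    2 ≤ ∏ i, P.m (js i) :=
  (P.two_le_m (js ⟨0, hl⟩)).trans (Finset.single_le_prod' (f := fun i => P.m (js i))
    (fun i _ => (by norm_num : 1 ≤ 2).trans (P.two_le_m _)) (Finset.mem_univ _))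

lemma WIWp.neg {P : IWParams} {p : ℝ} {f : c00} {w : ℕ∞} (h : WIWp P p f w) :
    WIWp P p (-f) w := by
  cases h with
  | unit i s hs =>
    rw [← Finsupp.single_neg]
    exact WIWp.unit i (-s) (by rcases hs with rfl | rfl <;> simp)
  | op l hl js d f w lam hlam hf hadm hvfg =>
    have := WIWp.op (P := P) (p := p) l hl js d f w (fun q => -lam q) (by simpa using hlam) hf
      hadm hvfg
    simpa only [neg_smul, Finset.sum_neg_distrib, smul_neg] using this

/-- The operations defining the norming set may be applied to any subfamily of an admissible very
fast growing family. -/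
lemma WIWp.op_subset {P : IWParams} {p : ℝ} {l : ℕ} (hl : 0 < l) (js : Fin l → ℕ) {d : ℕ}
    {f : Fin d → c00} {w : Fin d → ℕ∞} (hf : ∀ q, WIWp P p (f q) (w q))
    (hadm : Admissible (Schreier (∑ i, P.n (js i))) f)
    (hvfg : ∀ q r : Fin d, (q : ℕ) + 1 = (r : ℕ) → (maxSupp (f q) : ℕ∞) < w r)
    (T : Finset (Fin d)) (lam : Fin d → ℝ) (hlam : (∑ q ∈ T, |lam q| ^ conjExp p) ≤ 1) :
    WIWp P p (((∏ i, P.m (js i) : ℕ) : ℝ)⁻¹ • ∑ q ∈ T, lam q • f q)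
      ((∏ i, P.m (js i) : ℕ) : ℕ∞) := by
  let e := T.orderEmbOfFin rfl
  have hsum : ∀ {M : Type} [AddCommMonoid M] (g : Fin d → M),
      ∑ k, g (e k) = ∑ q ∈ T, g q := by
    intro M _ g
    rw [← Finset.sum_coe_sort T]
    exact (T.orderIsoOfFin rfl).toEquiv.sum_comp (fun q : T => g q)
  rw [← hsum (fun q => lam q • f q)]
  refine WIWp.op l hl js T.card (fun k => f (e k)) (fun k => w (e k)) (fun k => lam (e k))
    (by rw [hsum (fun q => |lam q| ^ conjExp p)]; exact hlam) (fun k => hf _)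
    ⟨fun k => hadm.1 _, fun q r hqr => hadm.2.1 _ _ (e.strictMono hqr),
      schreier_mono (P.sum_n_pos hl js) hadm.2.2 ?_⟩ ?_
  · intro i hi
    obtain ⟨k, -, rfl⟩ := Finset.mem_image.1 hi
    exact Finset.mem_image.2 ⟨e k, Finset.mem_univ _, rfl⟩
  · intro q r hqr
    have hlt : (e q : ℕ) < (e r : ℕ) := e.strictMono (Fin.lt_def.2 (by omega))
    -- The predecessor of `e r` need not lie in `T`, but its support ends no earlier than that of
    -- `e q`.
    let s : Fin d := ⟨(e r : ℕ) - 1, by omega⟩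
    have hs : (s : ℕ) + 1 = (e r : ℕ) := by simp only [s]; omega
    have hle : maxSupp (f (e q)) ≤ maxSupp (f s) := by
      rcases eq_or_lt_of_le (show e q ≤ s from Fin.le_def.2 (by omega)) with h | h
      · rw [h]
      · exact (maxSupp_lt_of_blocks (hadm.2.1 _ _ h) (hadm.1 s)).le
    exact lt_of_le_of_lt (by exact_mod_cast hle) (hvfg s (e r) hs)

lemma conjExp_holder {p : ℝ} (hp : 1 < p) : p.HolderConjugate (conjExp p) :=
  Real.HolderConjugate.conjExponent hp

/-- A sum of nonnegative terms all of which, save at most one, are switched off. -/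
lemma sum_ite_le {ι : Type*} (s : Finset ι) (R : ι → Prop) [DecidablePred R] {c : ℝ}
    (hc : 0 ≤ c) (h : ∀ i ∈ s, ∀ j ∈ s, R i → R j → i = j) :
    (∑ i ∈ s, if R i then c else 0) ≤ c := by
  rw [← Finset.sum_filter, Finset.sum_const, nsmul_eq_mul]
  have : (s.filter R).card ≤ 1 := Finset.card_le_one.2 fun i hi j hj =>
    h i (Finset.mem_filter.1 hi).1 j (Finset.mem_filter.1 hj).1 (Finset.mem_filter.1 hi).2
      (Finset.mem_filter.1 hj).2
  have h1 : ((s.filter R).card : ℝ) ≤ 1 := by exact_mod_cast this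
  nlinarith

lemma WIWp.abs_apply_le {P : IWParams} {p : ℝ} (hp : 1 < p) {f : c00} {w : ℕ∞}
    (h : WIWp P p f w) : ∀ j, |f j| ≤ 1 := by
  induction h with
  | unit i s hs =>
    intro j
    rw [Finsupp.single_apply]
    split_ifs
    · rcases hs with rfl | rfl <;> simp
    · simp
  | op l hl js d f w lam hlam hf hadm hvfg ih =>
    intro j
    have hw : (1 : ℝ) ≤ ((∏ i, P.m (js i) : ℕ) : ℝ) := by
      exact_mod_cast (by norm_num : 1 ≤ 2).trans (P.two_le_prod_m hl js)
    have hl1 : ∀ q, |lam q| ≤ 1 := by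
      intro q
      have h1 : |lam q| ^ conjExp p ≤ 1 := (Finset.single_le_sum
        (f := fun q => |lam q| ^ conjExp p) (fun _ _ => by positivity) (Finset.mem_univ q)).trans
        hlam
      by_contra hcon
      exact absurd h1 (not_le.2 (Real.one_lt_rpow (not_le.1 hcon) (conjExp_holder hp).symm.pos))
    have hs : |∑ q, lam q * f q j| ≤ 1 := by
      refine (Finset.abs_sum_le_sum_abs _ _).trans ?_
      refine le_trans (Finset.sum_le_sum (g := fun q => if f q j ≠ 0 then (1 : ℝ) else 0) ?_)
        (sum_ite_le _ _ zero_le_one ?_)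
      · intro q _
        split_ifs with hq
        · rw [abs_mul]
          exact mul_le_one₀ (hl1 q) (abs_nonneg _) (ih q j)
        · simp [not_not.1 hq]
      · intro q _ r _ hq hr
        rcases lt_trichotomy q r with h | h | h
        · exact absurd (lt_of_blocks (hadm.2.1 _ _ h) hq hr) (lt_irrefl _)
        · exact h
        · exact absurd (lt_of_blocks (hadm.2.1 _ _ h) hr hq) (lt_irrefl _)
    have : (((∏ i, P.m (js i) : ℕ) : ℝ)⁻¹ • ∑ q, lam q • f q) j
        = ((∏ i, P.m (js i) : ℕ) : ℝ)⁻¹ * ∑ q, lam q * f q j := by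
      simp
    rw [this, abs_mul, abs_of_nonneg (by positivity)]
    exact mul_le_one₀ (inv_le_one_of_one_le₀ hw) (abs_nonneg _) hs

lemma bddAbove_evalPair (P : IWParams) {p : ℝ} (hp : 1 < p) (x : c00) :
    BddAbove {r | ∃ f, (∃ w, WIWp P p f w) ∧ r = evalPair f x} := by
  refine ⟨∑ j ∈ x.support, |x j|, ?_⟩
  rintro r ⟨f, ⟨w, hf⟩, rfl⟩
  have h1 : evalPair f x ≤ ∑ j ∈ f.support, |x j| := by
    refine Finset.sum_le_sum fun j _ => (le_abs_self _).trans ?_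
    rw [abs_mul]
    exact mul_le_of_le_one_left (abs_nonneg _) (hf.abs_apply_le hp j)
  have h2 : ∑ j ∈ f.support, |x j| ≤ ∑ j ∈ f.support ∪ x.support, |x j| :=
    Finset.sum_le_sum_of_subset_of_nonneg Finset.subset_union_left fun _ _ _ => abs_nonneg _
  have h3 : ∑ j ∈ x.support, |x j| = ∑ j ∈ f.support ∪ x.support, |x j| :=
    Finset.sum_subset Finset.subset_union_right fun j _ hj => by
      simp [Finsupp.notMem_support_iff.1 hj]
  linarith

lemma WIWp.abs_evalPair_le_norm {P : IWParams} {p : ℝ} (hp : 1 < p) {f : c00} {w : ℕ∞}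
    (h : WIWp P p f w) (x : c00) : |evalPair f x| ≤ iwpNorm P p x := by
  refine abs_le'.2 ⟨le_csSup (bddAbove_evalPair P hp x) ⟨f, ⟨w, h⟩, rfl⟩, ?_⟩
  rw [← evalPair_neg_left]
  exact le_csSup (bddAbove_evalPair P hp x) ⟨-f, ⟨w, h.neg⟩, rfl⟩

/-- A subfamily of the components of a weighted functional, with its coefficients, has dual norm at
most the `ℓ_{p*}` norm of those coefficients. -/
lemma WIWp.abs_partial_le {P : IWParams} {p : ℝ} (hp : 1 < p) {l : ℕ} (hl : 0 < l)
    (js : Fin l → ℕ) {d : ℕ} {f : Fin d → c00} {w : Fin d → ℕ∞}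
    (hf : ∀ q, WIWp P p (f q) (w q))
    (hadm : Admissible (Schreier (∑ i, P.n (js i))) f)
    (hvfg : ∀ q r : Fin d, (q : ℕ) + 1 = (r : ℕ) → (maxSupp (f q) : ℕ∞) < w r)
    (T : Finset (Fin d)) (lam : Fin d → ℝ) (x : c00) (hx : iwpNorm P p x = 1) :
    |((∏ i, P.m (js i) : ℕ) : ℝ)⁻¹ * ∑ q ∈ T, lam q * evalPair (f q) x|
      ≤ (∑ q ∈ T, |lam q| ^ conjExp p) ^ (1 / conjExp p) := by
  have hq := (conjExp_holder hp).symm.pos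
  set A := ∑ q ∈ T, |lam q| ^ conjExp p with hA
  have hA0 : 0 ≤ A := Finset.sum_nonneg fun _ _ => by positivity
  rcases hA0.eq_or_lt with h0 | hpos
  · have hz : ∀ q ∈ T, lam q = 0 := by
      intro q hqT
      have := (Finset.sum_eq_zero_iff_of_nonneg (fun _ _ => by positivity)).1 h0.symm q hqT
      exact abs_eq_zero.1 ((Real.rpow_eq_zero (abs_nonneg _) hq.ne').1 this)
    rw [Finset.sum_eq_zero fun q hqT => by rw [hz q hqT, zero_mul]]
    simpa using Real.rpow_nonneg hA0 _
  · set L := A ^ (1 / conjExp p) with hL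
    have hL0 : 0 < L := Real.rpow_pos_of_pos hpos _
    have hLq : L ^ conjExp p = A := by
      rw [hL, one_div, Real.rpow_inv_rpow hA0 hq.ne']
    have hmem := WIWp.op_subset hl js hf hadm hvfg T (fun q => lam q / L) (by
      have : ∀ q, |lam q / L| ^ conjExp p = |lam q| ^ conjExp p / A := by
        intro q
        rw [abs_div, abs_of_pos hL0, Real.div_rpow (abs_nonneg _) hL0.le, hLq]
      simp only [this]
      rw [← Finset.sum_div, ← hA, div_self hpos.ne'])
    have h1 := hmem.abs_evalPair_le_norm hp x
    rw [hx, evalPair_smul_sum_left] at h1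
    have h2 : ((∏ i, P.m (js i) : ℕ) : ℝ)⁻¹ * ∑ q ∈ T, lam q * evalPair (f q) x
        = L * (((∏ i, P.m (js i) : ℕ) : ℝ)⁻¹ * ∑ q ∈ T, lam q / L * evalPair (f q) x) := by
      simp only [Finset.mul_sum]
      refine Finset.sum_congr rfl fun q _ => ?_
      field_simp
    rw [h2, abs_mul, abs_of_pos hL0]
    exact mul_le_of_le_one_right hL0.le h1

/-! ### The upper `ℓ_p` estimate -/

/-- Hölder's inequality for nonnegative families given through bounds on their power sums. -/
lemma holder_bound {ι : Type*} (s : Finset ι) {p q : ℝ} (hpq : p.HolderConjugate q)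
    (u v : ι → ℝ) (hu : ∀ i, 0 ≤ u i) (hv : ∀ i, 0 ≤ v i) {A : ℝ}
    (hA : ∑ i ∈ s, u i ^ p ≤ A) (hB : ∑ i ∈ s, v i ^ q ≤ 1) :
    ∑ i ∈ s, u i * v i ≤ A ^ (1 / p) := by
  have h := Real.inner_le_Lp_mul_Lq_of_nonneg s hpq (fun i _ => hu i) (fun i _ => hv i)
  have hU : 0 ≤ ∑ i ∈ s, u i ^ p := Finset.sum_nonneg fun i _ => Real.rpow_nonneg (hu i) _
  have hV : 0 ≤ ∑ i ∈ s, v i ^ q := Finset.sum_nonneg fun i _ => Real.rpow_nonneg (hv i) _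
  have h1 : (∑ i ∈ s, u i ^ p) ^ (1 / p) ≤ A ^ (1 / p) :=
    Real.rpow_le_rpow hU hA (one_div_nonneg.2 hpq.pos.le)
  have h2 : (∑ i ∈ s, v i ^ q) ^ (1 / q) ≤ 1 :=
    Real.rpow_le_one hV hB (one_div_nonneg.2 hpq.symm.pos.le)
  calc _ ≤ _ := h
    _ ≤ A ^ (1 / p) * 1 := mul_le_mul h1 h2 (Real.rpow_nonneg hV _)
        (Real.rpow_nonneg (hU.trans hA) _)
    _ = _ := mul_one _

open Classical in
lemma abs_evalPair_le (P : IWParams) (p : ℝ) (hp : 1 < p) (n : ℕ) (x : Fin n → c00)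
    (hblock : ∀ i j : Fin n, i < j → Blocks (x i) (x j))
    (hnorm : ∀ i, iwpNorm P p (x i) = 1) {f : c00} {w : ℕ∞} (hfw : WIWp P p f w) :
    ∀ a : Fin n → ℝ, |evalPair f (∑ i, a i • x i)| ≤ 2 * (∑ i, |a i| ^ p) ^ (1 / p) := by
  have hpq := conjExp_holder hp
  have hp0 : 0 < p := hpq.pos
  induction hfw with
  | unit j s hs =>
    intro a
    set A := (∑ i, |a i| ^ p) ^ (1 / p) with hA
    have hA0 : 0 ≤ A := Real.rpow_nonneg (Finset.sum_nonneg fun _ _ => by positivity) _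
    have haA : ∀ i, |a i| ≤ A := by
      intro i
      have : |a i| ^ p ≤ ∑ i, |a i| ^ p := Finset.single_le_sum
        (f := fun i => |a i| ^ p) (fun _ _ => by positivity) (Finset.mem_univ i)
      calc |a i| = (|a i| ^ p) ^ (1 / p) := by
            rw [one_div, Real.rpow_rpow_inv (abs_nonneg _) hp0.ne']
        _ ≤ A := Real.rpow_le_rpow (by positivity) this (by positivity)
    rw [evalPair_sum_right]
    have hev : ∀ i, evalPair (Finsupp.single j s) (x i) = s * x i j := fun i => by
      simp [evalPair]
    refine (Finset.abs_sum_le_sum_abs _ _).trans ?_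
    refine (Finset.sum_le_sum (g := fun i => if x i j ≠ 0 then A else 0) ?_).trans
      ((sum_ite_le _ _ hA0 ?_).trans (by linarith))
    · intro i _
      split_ifs with h
      · rw [abs_mul]
        have := (WIWp.unit (P := P) (p := p) j s hs).abs_evalPair_le_norm hp (x i)
        rw [hnorm i] at this
        exact (mul_le_of_le_one_right (abs_nonneg _) this).trans (haA i)
      · simp [hev, not_not.1 h]
    · intro q _ r _ hq hr
      rcases lt_trichotomy q r with h | h | h
      · exact absurd (lt_of_blocks (hblock _ _ h) hq hr) (lt_irrefl _)
      · exact h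
      · exact absurd (lt_of_blocks (hblock _ _ h) hr hq) (lt_irrefl _)
  | op l hl js d f w lam hlam hf hadm hvfg ih =>
    intro a
    set M : ℝ := ((∏ i, P.m (js i) : ℕ) : ℝ) with hM
    have hM2 : (2 : ℝ) ≤ M := by
      rw [hM]; exact_mod_cast P.two_le_prod_m hl js
    set S := ∑ i, |a i| ^ p with hS
    -- `Fst q i`: `x i` is the first vector on which `f q` does not vanish;
    -- `Snd q i`: `f q` does not vanish on `x i`, and `x i` is not the first such vector.
    let c : Fin d → Fin n → ℝ := fun q i => evalPair (f q) (x i)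
    let Fst : Fin d → Fin n → Prop := fun q i => c q i ≠ 0 ∧ ∀ i' < i, c q i' = 0
    let Snd : Fin d → Fin n → Prop := fun q i => c q i ≠ 0 ∧ ∃ i' < i, c q i' ≠ 0
    have hFst : ∀ q i j, Fst q i → Fst q j → i = j := by
      intro q i j hi hj
      rcases lt_trichotomy i j with h | h | h
      · exact absurd (hj.2 i h) hi.1
      · exact h
      · exact absurd (hi.2 j h) hj.1
    have hSnd_lt : ∀ q r i, Snd q i → Snd r i → ¬ q < r := by
      rintro q r i ⟨hq, -⟩ ⟨-, i', hi', hr⟩ hqr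
      obtain ⟨j, hj1, hj2⟩ := exists_of_evalPair_ne hq
      obtain ⟨k, hk1, hk2⟩ := exists_of_evalPair_ne hr
      exact lt_asymm (lt_of_blocks (hadm.2.1 _ _ hqr) hj1 hk1)
        (lt_of_blocks (hblock _ _ hi') hk2 hj2)
    have hSnd : ∀ i q r, Snd q i → Snd r i → q = r := fun i q r hq hr =>
      le_antisymm (not_lt.1 (hSnd_lt r q i hr hq)) (not_lt.1 (hSnd_lt q r i hq hr))
    have hsplit : ∀ q i, c q i = (if Fst q i then c q i else 0) + if Snd q i then c q i else 0 := by
      intro q i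
      by_cases h0 : c q i = 0
      · simp [h0]
      · by_cases h1 : ∀ i' < i, c q i' = 0
        · have hF : Fst q i := ⟨h0, h1⟩
          have hN : ¬ Snd q i := fun h => by
            obtain ⟨-, i', hi', hne⟩ := h
            exact hne (h1 i' hi')
          rw [if_pos hF, if_neg hN, add_zero]
        · have hF : ¬ Fst q i := fun h => h1 h.2
          have hN : Snd q i := ⟨h0, by push Not at h1; exact h1⟩
          rw [if_neg hF, if_pos hN, zero_add]
    let T : Fin n → Finset (Fin d) := fun i => Finset.univ.filter fun q => Fst q i
    have hexp : evalPair (M⁻¹ • ∑ q, lam q • f q) (∑ i, a i • x i)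
        = ∑ i, a i * (M⁻¹ * ∑ q ∈ T i, lam q * evalPair (f q) (x i))
          + M⁻¹ * ∑ q, lam q * evalPair (f q) (∑ i, (if Snd q i then a i else 0) • x i) := by
      rw [evalPair_smul_sum_left]
      simp only [evalPair_sum_right]
      have h1 : ∀ q, ∑ i, a i * evalPair (f q) (x i)
          = ∑ i, a i * (if Fst q i then c q i else 0)
            + ∑ i, (if Snd q i then a i else 0) * evalPair (f q) (x i) := by
        intro q
        rw [← Finset.sum_add_distrib]
        refine Finset.sum_congr rfl fun i _ => ?_
        have h := hsplit q i
        change a i * c q i = _ + _ * c q i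
        conv_lhs => rw [h]
        rw [mul_add]
        congr 1
        split_ifs <;> simp
      simp only [h1, mul_add, Finset.sum_add_distrib]
      congr 1
      simp only [T, Finset.sum_filter, Finset.mul_sum]
      rw [Finset.sum_comm]
      refine Finset.sum_congr rfl fun i _ => Finset.sum_congr rfl fun q _ => ?_
      split_ifs
      · change _ = a i * (M⁻¹ * (lam q * c q i))
        ring
      · simp
    have hpart1 : |∑ i, a i * (M⁻¹ * ∑ q ∈ T i, lam q * evalPair (f q) (x i))|
        ≤ S ^ (1 / p) := by
      refine (Finset.abs_sum_le_sum_abs _ _).trans ?_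
      refine (Finset.sum_le_sum (g := fun i =>
        |a i| * (∑ q ∈ T i, |lam q| ^ conjExp p) ^ (1 / conjExp p)) ?_).trans
        (holder_bound _ hpq _ _ (fun i => abs_nonneg _)
          (fun i => Real.rpow_nonneg (Finset.sum_nonneg fun _ _ => by positivity) _) le_rfl ?_)
      · intro i _
        rw [abs_mul]
        exact mul_le_mul_of_nonneg_left
          (WIWp.abs_partial_le hp hl js hf hadm hvfg (T i) lam (x i) (hnorm i)) (abs_nonneg _)
      · refine le_trans (le_of_eq ?_) ((Finset.sum_le_sum fun q _ =>
          sum_ite_le Finset.univ (fun i => Fst q i) (c := |lam q| ^ conjExp p) (by positivity)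
            fun i _ j _ => hFst q i j).trans hlam)
        rw [Finset.sum_comm]
        refine Finset.sum_congr rfl fun i _ => ?_
        rw [one_div, Real.rpow_inv_rpow (Finset.sum_nonneg fun _ _ => by positivity)
          hpq.symm.pos.ne', Finset.sum_filter]
    have hpart2 : |M⁻¹ * ∑ q, lam q * evalPair (f q) (∑ i, (if Snd q i then a i else 0) • x i)|
        ≤ S ^ (1 / p) := by
      let N : Fin d → ℝ := fun q => (∑ i, |if Snd q i then a i else 0| ^ p) ^ (1 / p)
      have hN0 : ∀ q, 0 ≤ N q := fun q =>
        Real.rpow_nonneg (Finset.sum_nonneg fun _ _ => by positivity) _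
      have h1 : ∑ q, N q * |lam q| ≤ S ^ (1 / p) := by
        refine holder_bound _ hpq _ _ hN0 (fun q => abs_nonneg _) ?_ hlam
        have h2 : ∀ q, N q ^ p = ∑ i, if Snd q i then |a i| ^ p else 0 := by
          intro q
          simp only [N]
          rw [one_div, Real.rpow_inv_rpow (Finset.sum_nonneg fun _ _ => by positivity) hp0.ne']
          refine Finset.sum_congr rfl fun i _ => ?_
          split_ifs
          · rfl
          · simp [hp0.ne']
        simp only [h2]
        rw [Finset.sum_comm]
        exact Finset.sum_le_sum fun i _ => sum_ite_le Finset.univ (fun q => Snd q i)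
          (by positivity) fun q _ r _ => hSnd i q r
      have h3 : |∑ q, lam q * evalPair (f q) (∑ i, (if Snd q i then a i else 0) • x i)|
          ≤ 2 * ∑ q, N q * |lam q| := by
        refine (Finset.abs_sum_le_sum_abs _ _).trans ?_
        rw [Finset.mul_sum]
        refine Finset.sum_le_sum fun q _ => ?_
        rw [abs_mul]
        have := mul_le_mul_of_nonneg_left (ih q fun i => if Snd q i then a i else 0)
          (abs_nonneg (lam q))
        refine this.trans (le_of_eq ?_)
        change |lam q| * (2 * N q) = _
        ring
      have h0 : 0 ≤ ∑ q, N q * |lam q| :=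
        Finset.sum_nonneg fun q _ => mul_nonneg (hN0 q) (abs_nonneg _)
      rw [abs_mul, abs_of_nonneg (by positivity)]
      calc M⁻¹ * _ ≤ M⁻¹ * (2 * ∑ q, N q * |lam q|) :=
            mul_le_mul_of_nonneg_left h3 (by positivity)
        _ = (M⁻¹ * 2) * ∑ q, N q * |lam q| := by ring
        _ ≤ 1 * ∑ q, N q * |lam q| := by
            refine mul_le_mul_of_nonneg_right ?_ h0
            rw [inv_mul_le_iff₀ (by linarith)]
            linarith
        _ ≤ _ := by rw [one_mul]; exact h1
    rw [hexp, two_mul]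
    exact (abs_add_le _ _).trans (add_le_add hpart1 hpart2)

/-- Let `(x_i)_{i=1}^n` be a normalized block sequence in `X_iw^p`.
Then for all scalars `a_1, …, a_n`, `‖∑ a_i x_i‖ ≤ 2 (∑ |a_i|^p)^{1/p}`. -/
theorem statement15 (P : IWParams) (p : ℝ) (hp : 1 < p) (n : ℕ) (x : Fin n → c00)
    (hsupp : ∀ i, (x i).support.Nonempty)
    (hblock : ∀ i j : Fin n, i < j → Blocks (x i) (x j))
    (hnorm : ∀ i, iwpNorm P p (x i) = 1) (a : Fin n → ℝ) :
    iwpNorm P p (∑ i, a i • x i) ≤ 2 * (∑ i, |a i| ^ p) ^ (1 / p) := by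
  refine csSup_le ⟨_, _, ⟨_, WIWp.unit 0 1 (Or.inl rfl)⟩, rfl⟩ ?_
  rintro r ⟨f, ⟨w, hf⟩, rfl⟩
  exact (le_abs_self _).trans (abs_evalPair_le P p hp n x hblock hnorm hf a)
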